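/- Let R be a ring and S a left and right Ore set in R. Then there exists a pair (Q, f), where Q is a ring and f: R → Q is a ring homomorphism, such that: (i) f(s) is a unit of Q for every s ∈ S; and for any other pair (Q', f') with f': R → Q' a ring homomorphism satisfying (i), there is a unique ring homomorphism h: Q → Q' with f' = h ∘ f. The ring Q is unique up to isomorphism; moreover, Q is isomorphic to the (left and right) Ore localization of R/a at the denominator set π(S), where a is the least two-sided ideal of R such that the image π(S) of S in R/a is a left and right denominator set with ass = 0. -/

import Mathlib

/-! The ideal `I₀` is explicit: it is the set of all `r` with `s * r * t = 0` for some `s, t ∈ S`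
(`torsionIdeal`). The left Ore condition makes it closed under left multiplication, the right Ore
condition makes it closed under right multiplication, and common multiples make it closed under
addition. It misses `S`, since `s * x * t ∈ S` is nonzero for `x ∈ S`, and it is visibly closed under
cancelling elements of `S` on either side. Hence the image of `S` in `R / I₀` is a set of regular
elements that is both left and right Ore (`memJ_torsionIdeal`). Conversely, any ideal modulo which
the elements of `S` are regular contains `I₀` (`torsionIdeal_le`), and so does the kernel of any
homomorphism inverting `S`. Such homomorphisms therefore factor uniquely through the Ore localization
of `R / I₀` at the image of `S` (`exists_localization`). -/

/-! Basic notions from the paper "The largest left quotient ring of a ring"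
(V. V. Bavula): multiplicative sets, left Ore sets, left denominator sets,
`ass S`, and an abstract characterization of the left Ore localization. -/

universe u

namespace BavulaLQR

variable {R : Type*}

/-- A multiplicative set: contains `1`, does not contain `0`, closed under `*`. -/
def IsMulSet [Ring R] (S : Set R) : Prop :=
  (1 : R) ∈ S ∧ (0 : R) ∉ S ∧ ∀ s ∈ S, ∀ t ∈ S, s * t ∈ S

/-- A left Ore set: a multiplicative set satisfying the left Ore condition. -/
def IsLeftOre [Ring R] (S : Set R) : Prop :=
  IsMulSet S ∧ ∀ (r : R), ∀ s ∈ S, ∃ r' : R, ∃ s' ∈ S, s' * r = r' * s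

/-- `ass S = {r | s * r = 0 for some s ∈ S}`. -/
def assSet [Ring R] (S : Set R) : Set R := {r : R | ∃ s ∈ S, s * r = 0}

/-- The right-sided analogue of `assSet`. -/
def assRSet [Ring R] (S : Set R) : Set R := {r : R | ∃ s ∈ S, r * s = 0}

/-- A left denominator set. -/
def IsLeftDen [Ring R] (S : Set R) : Prop :=
  IsLeftOre S ∧ ∀ (r : R), ∀ s ∈ S, r * s = 0 → ∃ t ∈ S, t * r = 0

/-- A right Ore set. -/
def IsRightOre [Ring R] (S : Set R) : Prop :=
  IsMulSet S ∧ ∀ (r : R), ∀ s ∈ S, ∃ r' : R, ∃ s' ∈ S, r * s' = s * r'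

/-- A right denominator set. -/
def IsRightDen [Ring R] (S : Set R) : Prop :=
  IsRightOre S ∧ ∀ (r : R), ∀ s ∈ S, s * r = 0 → ∃ t ∈ S, r * t = 0

/-- `f : R →+* Q` is a left localization of `R` at `S`: every `f s` is a unit,
every element of `Q` is of the form `(f s)⁻¹ * f r`, and `ker f = ass S`. -/
def IsLeftLocalization [Ring R] (S : Set R) {Q : Type*} [Ring Q] (f : R →+* Q) : Prop :=
  (∀ s ∈ S, IsUnit (f s)) ∧
  (∀ q : Q, ∃ s ∈ S, ∃ r : R, f s * q = f r) ∧
  (∀ r : R, f r = 0 ↔ r ∈ assSet S)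

/-- `f : R →+* Q` is a right localization of `R` at `S`. -/
def IsRightLocalization [Ring R] (S : Set R) {Q : Type*} [Ring Q] (f : R →+* Q) : Prop :=
  (∀ s ∈ S, IsUnit (f s)) ∧
  (∀ q : Q, ∃ s ∈ S, ∃ r : R, q * f s = f r) ∧
  (∀ r : R, f r = 0 ↔ r ∈ assRSet S)

/-- `S_a(R)`: the union of all left denominator sets `S` with `ass S = a`. -/
def largestLeftDen [Ring R] (a : Set R) : Set R :=
  {x : R | ∃ S : Set R, (IsLeftDen S ∧ assSet S = a) ∧ x ∈ S}

/-- `S₀(R)`, the largest left denominator set with `ass = 0`. -/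
def S0 (R : Type*) [Ring R] : Set R := largestLeftDen ({0} : Set R)

end BavulaLQR

namespace BavulaLQR

/-- A two-sided ideal `I` of `R` belongs to `J(R, S)` if the image of `S` in `R/I`
is a left and right denominator set of `R/I` with `ass = 0`. -/
def memJ {R : Type u} [Ring R] (S : Set R) (I : TwoSidedIdeal R) : Prop :=
  IsLeftDen (⇑I.ringCon.mk' '' S) ∧ IsRightDen (⇑I.ringCon.mk' '' S) ∧
  assSet (⇑I.ringCon.mk' '' S) = ({0} : Set I.ringCon.Quotient) ∧
  assRSet (⇑I.ringCon.mk' '' S) = ({0} : Set I.ringCon.Quotient)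

/-- For a left denominator set `T` that is right Ore and consists of regular elements, Mathlib's
`OreLocalization` is a left and right localization, with the expected lifting property. -/
theorem exists_localization {A : Type u} [Ring A] (T : Set A) (hl : IsLeftDen T)
    (hr : IsRightOre T) (h0 : assSet T = {0}) (h0R : assRSet T = {0}) :
    ∃ (Q : Type u) (_ : Ring Q) (g : A →+* Q),
      IsLeftLocalization T g ∧ IsRightLocalization T g ∧
      ∀ (Q' : Type u) [Ring Q'] (f' : A →+* Q'), (∀ s ∈ T, IsUnit (f' s)) →
        ∃ h : Q →+* Q', h.comp g = f' := by
  obtain ⟨⟨⟨h1, -, hmul⟩, hore⟩, hcancel⟩ := hl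
  let M : Submonoid A :=
    { carrier := T, one_mem' := h1, mul_mem' := fun {a b} ha hb => hmul a ha b hb }
  obtain ⟨inst⟩ : Nonempty (OreLocalization.OreSet M) := by
    refine OreLocalization.nonempty_oreSet_iff.2 ⟨fun r₁ r₂ s h => ?_, fun r s => ?_⟩
    · obtain ⟨t, ht, h'⟩ := hcancel (r₁ - r₂) s s.2 (by rw [sub_mul, h, sub_self])
      exact ⟨⟨t, ht⟩, sub_eq_zero.1 (by rw [← mul_sub]; exact h')⟩
    · obtain ⟨r', s', hs', h⟩ := hore r s s.2
      exact ⟨r', ⟨s', hs'⟩, h⟩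
  let g : A →+* OreLocalization M A := OreLocalization.numeratorRingHom
  have hunit : ∀ s ∈ T, IsUnit (g s) := fun s hs => OreLocalization.numerator_isUnit (⟨s, hs⟩ : M)
  have hfrac : ∀ q : OreLocalization M A, ∃ s ∈ T, ∃ r : A, g s * q = g r := by
    intro q
    induction q using OreLocalization.ind with
    | _ r s =>
      refine ⟨s, s.2, r, ?_⟩
      exact OreLocalization.mul_cancel
  have hker : ∀ r, g r = 0 ↔ r = 0 := by
    intro r
    refine ⟨fun h => ?_, fun h => by rw [h, map_zero]⟩
    refine OreLocalization.numeratorHom_inj (S := M) (fun s hs x hx => ?_) (h.trans (map_zero g).symm)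
    have : x ∈ assSet T := ⟨s, hs, hx⟩
    rwa [h0] at this
  refine ⟨OreLocalization M A, inferInstance, g, ⟨hunit, hfrac, fun r => by rw [hker, h0]; rfl⟩,
    ⟨hunit, fun q => ?_, fun r => by rw [hker, h0R]; rfl⟩, fun Q' _ f' hf' => ?_⟩
  · obtain ⟨s, hs, r, hq⟩ := hfrac q
    -- If `q = s⁻¹ r` and `r v = s u`, then `q = u v⁻¹`.
    obtain ⟨u, v, hv, h⟩ := hr.2 r s hs
    refine ⟨v, hv, u, (hunit s hs).mul_left_cancel ?_⟩
    rw [← mul_assoc, hq, ← map_mul, h, map_mul]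
  · let fS : M →* Q'ˣ := IsUnit.liftRight ((f' : A →* Q').comp M.subtype) fun s => hf' s s.2
    have hfS : ∀ s : M, f' s = fS s := fun s =>
      (IsUnit.coe_liftRight ((f' : A →* Q').comp M.subtype) (fun s => hf' s s.2) s).symm
    refine ⟨OreLocalization.universalHom f' fS hfS, ?_⟩
    ext r
    exact OreLocalization.universalHom_commutes f' fS hfS

/-- The set of all `r` with `s * r * t = 0` for some `s, t ∈ S`, which is a two-sided ideal
when `S` is a left and right Ore set. -/
def torsionIdeal {R : Type u} [Ring R] (S : Set R) (hl : IsLeftOre S) (hr : IsRightOre S) :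
    TwoSidedIdeal R :=
  TwoSidedIdeal.mk' {r : R | ∃ s ∈ S, ∃ t ∈ S, s * r * t = 0}
    ⟨1, hl.1.1, 1, hl.1.1, by simp⟩
    (by
      -- Pass to a common left multiple of the left factors and a common right multiple of the
      -- right factors.
      rintro x y ⟨s, hs, t, ht, h⟩ ⟨s', hs', t', ht', h'⟩
      obtain ⟨a, b, hb, e⟩ := hl.2 s s' hs'
      obtain ⟨c, d, hd, e'⟩ := hr.2 t t' ht'
      refine ⟨b * s, hl.1.2.2 b hb s hs, t * d, hl.1.2.2 t ht d hd, ?_⟩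
      have h1 : b * s * x * (t * d) = b * (s * x * t) * d := by noncomm_ring
      have h2 : b * s * y * (t * d) = a * (s' * y * t') * c := by rw [e, e']; noncomm_ring
      rw [mul_add, add_mul, h1, h2, h, h']
      simp)
    (by
      rintro x ⟨s, hs, t, ht, h⟩
      exact ⟨s, hs, t, ht, by rw [mul_neg, neg_mul, h, neg_zero]⟩)
    (by
      rintro x y ⟨s, hs, t, ht, h⟩
      obtain ⟨a, b, hb, e⟩ := hl.2 x s hs
      refine ⟨b, hb, t, ht, ?_⟩
      have h1 : b * (x * y) * t = a * (s * y * t) := by rw [← mul_assoc, e]; noncomm_ring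
      rw [h1, h, mul_zero])
    (by
      rintro x y ⟨s, hs, t, ht, h⟩
      obtain ⟨a, b, hb, e⟩ := hr.2 y t ht
      refine ⟨s, hs, b, hb, ?_⟩
      have h1 : s * (x * y) * b = s * x * (y * b) := by noncomm_ring
      rw [h1, e, ← mul_assoc, h, zero_mul])

theorem mem_torsionIdeal {R : Type u} [Ring R] {S : Set R} {hl : IsLeftOre S}
    {hr : IsRightOre S} {r : R} :
    r ∈ torsionIdeal S hl hr ↔ ∃ s ∈ S, ∃ t ∈ S, s * r * t = 0 := by
  simp [torsionIdeal, TwoSidedIdeal.mem_mk']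

theorem mk'_eq_zero {R : Type u} [Ring R] (I : TwoSidedIdeal R) (r : R) :
    I.ringCon.mk' r = 0 ↔ r ∈ I := by
  rw [TwoSidedIdeal.mem_iff, ← map_zero I.ringCon.mk']
  exact RingCon.eq _

/-- The torsion ideal misses `S` because `s * x * t ∈ S` for `x ∈ S`, and it is closed under
cancellation of elements of `S` on either side. -/
theorem memJ_torsionIdeal {R : Type u} [Ring R] (S : Set R) (hl : IsLeftOre S)
    (hr : IsRightOre S) : memJ S (torsionIdeal S hl hr) := by
  set I := torsionIdeal S hl hr with hI
  have hsurj : Function.Surjective I.ringCon.mk' := RingCon.mk'_surjective _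
  have hleft : ∀ s ∈ S, ∀ x, I.ringCon.mk' s * x = 0 → x = 0 := by
    intro s hs x hx
    obtain ⟨r, rfl⟩ := hsurj x
    rw [← map_mul, mk'_eq_zero, mem_torsionIdeal] at hx
    obtain ⟨a, ha, b, hb, h⟩ := hx
    rw [mk'_eq_zero, mem_torsionIdeal]
    exact ⟨a * s, hl.1.2.2 a ha s hs, b, hb, by rw [mul_assoc a, h]⟩
  have hright : ∀ s ∈ S, ∀ x, x * I.ringCon.mk' s = 0 → x = 0 := by
    intro s hs x hx
    obtain ⟨r, rfl⟩ := hsurj x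
    rw [← map_mul, mk'_eq_zero, mem_torsionIdeal] at hx
    obtain ⟨a, ha, b, hb, h⟩ := hx
    rw [mk'_eq_zero, mem_torsionIdeal]
    exact ⟨a, ha, s * b, hl.1.2.2 s hs b hb, by rw [← h]; noncomm_ring⟩
  have hmul : IsMulSet (⇑I.ringCon.mk' '' S) := by
    refine ⟨⟨1, hl.1.1, map_one _⟩, ?_, ?_⟩
    · rintro ⟨x, hx, h⟩
      rw [mk'_eq_zero, mem_torsionIdeal] at h
      obtain ⟨a, ha, b, hb, h⟩ := h
      exact hl.1.2.1 (h ▸ hl.1.2.2 _ (hl.1.2.2 a ha x hx) b hb)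
    · rintro _ ⟨x, hx, rfl⟩ _ ⟨y, hy, rfl⟩
      exact ⟨x * y, hl.1.2.2 x hx y hy, map_mul _ _ _⟩
  have h1 : (1 : I.ringCon.Quotient) ∈ ⇑I.ringCon.mk' '' S := hmul.1
  refine ⟨⟨⟨hmul, ?_⟩, ?_⟩, ⟨⟨hmul, ?_⟩, ?_⟩, ?_, ?_⟩
  · rintro r _ ⟨s, hs, rfl⟩
    obtain ⟨r, rfl⟩ := hsurj r
    obtain ⟨a, b, hb, e⟩ := hl.2 r s hs
    exact ⟨I.ringCon.mk' a, _, ⟨b, hb, rfl⟩, by rw [← map_mul, e, map_mul]⟩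
  · rintro r _ ⟨s, hs, rfl⟩ h
    exact ⟨1, h1, by rw [hright s hs r h, mul_zero]⟩
  · rintro r _ ⟨s, hs, rfl⟩
    obtain ⟨r, rfl⟩ := hsurj r
    obtain ⟨a, b, hb, e⟩ := hr.2 r s hs
    exact ⟨I.ringCon.mk' a, _, ⟨b, hb, rfl⟩, by rw [← map_mul, e, map_mul]⟩
  · rintro r _ ⟨s, hs, rfl⟩ h
    exact ⟨1, h1, by rw [hleft s hs r h, zero_mul]⟩
  · ext x
    refine ⟨?_, ?_⟩
    · rintro ⟨_, ⟨s, hs, rfl⟩, h⟩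
      exact hleft s hs x h
    · rintro rfl
      exact ⟨1, h1, mul_zero _⟩
  · ext x
    refine ⟨?_, ?_⟩
    · rintro ⟨_, ⟨s, hs, rfl⟩, h⟩
      exact hright s hs x h
    · rintro rfl
      exact ⟨1, h1, zero_mul _⟩

theorem torsionIdeal_le {R : Type u} [Ring R] (S : Set R) (hl : IsLeftOre S)
    (hr : IsRightOre S) (I : TwoSidedIdeal R) (hI : memJ S I) : torsionIdeal S hl hr ≤ I := by
  intro r hr'
  obtain ⟨s, hs, t, ht, h⟩ := mem_torsionIdeal.1 hr'
  obtain ⟨-, -, h0, h0R⟩ := hI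
  have h1 : I.ringCon.mk' (r * t) ∈ assSet (⇑I.ringCon.mk' '' S) :=
    ⟨_, ⟨s, hs, rfl⟩, by rw [← map_mul, ← mul_assoc, h, map_zero]⟩
  rw [h0] at h1
  have h2 : I.ringCon.mk' r ∈ assRSet (⇑I.ringCon.mk' '' S) :=
    ⟨_, ⟨t, ht, rfl⟩, by rw [← map_mul]; exact h1⟩
  rw [h0R] at h2
  exact (mk'_eq_zero I r).1 h2

/-- Corollary 4.11. For every left and right Ore set `S` of `R`
there is a pair `(Q, f)` with `f : R → Q` inverting all elements of `S` and universal
among all such pairs; `Q` is unique up to isomorphism, and `Q` is the (left and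
right) Ore localization of `R/a` at the image of `S`, where `a` is the least element
of `J(R, S)`. -/
theorem two_sided_ore_universal_localization {R : Type u} [Ring R] (S : Set R)
    (hl : IsLeftOre S) (hr : IsRightOre S) :
    ∃ (Q : Type u) (_ : Ring Q) (f : R →+* Q),
      (∀ s ∈ S, IsUnit (f s)) ∧
      (∀ (Q' : Type u) [Ring Q'] (f' : R →+* Q'), (∀ s ∈ S, IsUnit (f' s)) →
        ∃! h : Q →+* Q', h.comp f = f') ∧
      (∀ (Q' : Type u) [Ring Q'] (f' : R →+* Q'),
        ((∀ s ∈ S, IsUnit (f' s)) ∧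
          ∀ (Q'' : Type u) [Ring Q''] (f'' : R →+* Q''), (∀ s ∈ S, IsUnit (f'' s)) →
            ∃! h : Q' →+* Q'', h.comp f' = f'') →
        ∃ e : Q ≃+* Q', (e : Q →+* Q').comp f = f') ∧
      ∃ I₀ : TwoSidedIdeal R, memJ S I₀ ∧ (∀ I : TwoSidedIdeal R, memJ S I → I₀ ≤ I) ∧
        ∃ g : I₀.ringCon.Quotient →+* Q,
          IsLeftLocalization (⇑I₀.ringCon.mk' '' S) g ∧
          IsRightLocalization (⇑I₀.ringCon.mk' '' S) g := by
  have hJ := memJ_torsionIdeal S hl hr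
  set I := torsionIdeal S hl hr with hI
  obtain ⟨Q, _, g, hgl, hgr, hlift⟩ :=
    exists_localization (⇑I.ringCon.mk' '' S) hJ.1 hJ.2.1.1 hJ.2.2.1 hJ.2.2.2
  have hunit : ∀ s ∈ S, IsUnit (g.comp I.ringCon.mk' s) := fun s hs => hgl.1 _ ⟨s, hs, rfl⟩
  have huniv : ∀ (Q' : Type u) [Ring Q'] (f' : R →+* Q'), (∀ s ∈ S, IsUnit (f' s)) →
      ∃! h : Q →+* Q', h.comp (g.comp I.ringCon.mk') = f' := by
    intro Q' _ f' hf'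
    have hker : ∀ r ∈ I, f' r = 0 := by
      intro r hrI
      obtain ⟨s, hs, t, ht, h⟩ := mem_torsionIdeal.1 hrI
      have h' := congrArg f' h
      rw [map_mul, map_mul, map_zero, (hf' t ht).mul_left_eq_zero,
        (hf' s hs).mul_right_eq_zero] at h'
      exact h'
    have hle : I.ringCon ≤ RingCon.ker f' := by
      intro x y hxy
      have := hker _ ((TwoSidedIdeal.rel_iff I x y).1 hxy)
      rw [map_sub, sub_eq_zero] at this
      exact this
    let k : I.ringCon.Quotient →+* Q' := I.ringCon.lift f' hle
    have hk : ∀ r, k (I.ringCon.mk' r) = f' r := fun r => rfl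
    obtain ⟨h, hh⟩ := hlift Q' k (by
      rintro _ ⟨s, hs, rfl⟩
      rw [hk]
      exact hf' s hs)
    have hhg : ∀ x, h (g x) = k x := fun x => RingHom.congr_fun hh x
    refine ⟨h, by ext r; exact hhg _, fun h' hh' => ?_⟩
    ext q
    -- Writing `q` as a fraction with denominator `s` and numerator `r`, both homomorphisms send it
    -- to the unique solution `x` of the equation `f' s * x = f' r`.
    obtain ⟨_, ⟨s, hs, rfl⟩, x, hq⟩ := hgl.2.1 q
    obtain ⟨r, rfl⟩ := RingCon.mk'_surjective I.ringCon x
    have hh'g : ∀ r, h' (g (I.ringCon.mk' r)) = f' r := fun r => RingHom.congr_fun hh' r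
    have e1 : f' s * h q = f' r := by rw [← hk s, ← hhg, ← map_mul, hq, hhg, hk]
    have e2 : f' s * h' q = f' r := by rw [← hh'g s, ← map_mul, hq, hh'g]
    exact (hf' s hs).mul_left_cancel (e2.trans e1.symm)
  refine ⟨Q, inferInstance, g.comp I.ringCon.mk', hunit, huniv, ?_, I, hJ,
    torsionIdeal_le S hl hr, g, hgl, hgr⟩
  rintro Q' _ f' ⟨hu', huniv'⟩
  obtain ⟨a, ha, -⟩ := huniv Q' f' hu'
  obtain ⟨b, hb, -⟩ := huniv' Q (g.comp I.ringCon.mk') hunit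
  have hba : b.comp a = RingHom.id Q := (huniv Q _ hunit).unique
    (by rw [RingHom.comp_assoc, ha, hb]) (RingHom.id_comp _)
  have hab : a.comp b = RingHom.id Q' := (huniv' Q' _ hu').unique
    (by rw [RingHom.comp_assoc, hb, ha]) (RingHom.id_comp _)
  exact ⟨RingEquiv.ofRingHom a b hab hba, ha⟩

end BavulaLQR
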